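/- arXiv:1101.4665 — 4 statements merged into one kernel-verified Lean document; each statement's English description precedes it below -/
import Mathlib

section
/- Let V : ℝⁿ × ℝ × ℝ → ℝ, (φ, T, ξ) ↦ V(φ, T, ξ), be continuously differentiable, and let C : ℝⁿ × ℝ → ℝⁿ satisfy the Nielsen identity ∂V/∂ξ(φ, T, ξ) = − Σᵢ Cᵢ(φ, ξ) · ∂V/∂φᵢ(φ, T, ξ) for all (φ, T, ξ). Suppose φ⁽¹⁾, φ⁽²⁾ : ℝ → ℝⁿ and T_c : ℝ → ℝ are differentiable functions of ξ such that for all ξ: (i) V(φ⁽¹⁾(ξ), T_c(ξ), ξ) = V(φ⁽²⁾(ξ), T_c(ξ), ξ) (degeneracy), and (ii) ∂V/∂φᵢ vanishes at both (φ⁽¹⁾(ξ), T_c(ξ), ξ) and (φ⁽²⁾(ξ), T_c(ξ), ξ) for every i (stationarity). If at some ξ₀ the values ∂V/∂T(φ⁽¹⁾(ξ₀), T_c(ξ₀), ξ₀) and ∂V/∂T(φ⁽²⁾(ξ₀), T_c(ξ₀), ξ₀) are unequal, then dT_c/dξ(ξ₀) = 0. -/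
lemma phase_hasDerivAt {n : ℕ} (V : (Fin n → ℝ) → ℝ → ℝ → ℝ)
    (hV : ContDiff ℝ 1 (fun p : (Fin n → ℝ) × ℝ × ℝ => V p.1 p.2.1 p.2.2))
    (C : (Fin n → ℝ) → ℝ → Fin n → ℝ)
    (hNielsen : ∀ (φ : Fin n → ℝ) (T ξ : ℝ),
      deriv (fun s => V φ T s) ξ =
        - ∑ i, C φ ξ i * fderiv ℝ (fun ψ => V ψ T ξ) φ (Pi.single i 1))
    (φ : ℝ → Fin n → ℝ) (Tc : ℝ → ℝ)
    (hφ : Differentiable ℝ φ) (hTc : Differentiable ℝ Tc)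
    (hstat : ∀ ξ i, fderiv ℝ (fun ψ => V ψ (Tc ξ) ξ) (φ ξ) (Pi.single i 1) = 0)
    (x : ℝ) :
    HasDerivAt (fun s => V (φ s) (Tc s) s)
      (deriv Tc x * deriv (fun T => V (φ x) T x) (Tc x)) x := by
  have hF := (hV.differentiable one_ne_zero (φ x, Tc x, x)).hasFDerivAt
  set L := fderiv ℝ (fun p : (Fin n → ℝ) × ℝ × ℝ => V p.1 p.2.1 p.2.2) (φ x, Tc x, x) with hL
  have h0 : HasDerivAt (fun s => V (φ s) (Tc s) s) (L (deriv φ x, deriv Tc x, 1)) x :=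
    hF.comp_hasDerivAt (f := fun s => (φ s, Tc s, s)) x
      ((hφ x).hasDerivAt.prodMk ((hTc x).hasDerivAt.prodMk (hasDerivAt_id x)))
  have hT : HasDerivAt (fun T => V (φ x) T x) (L (0, 1, 0)) (Tc x) :=
    hF.comp_hasDerivAt (f := fun T => (φ x, T, x)) (Tc x)
      ((hasDerivAt_const _ _).prodMk ((hasDerivAt_id _).prodMk (hasDerivAt_const _ _)))
  have hX : HasDerivAt (fun s => V (φ x) (Tc x) s) (L (0, 0, 1)) x :=
    hF.comp_hasDerivAt (f := fun s => (φ x, Tc x, s)) x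
      ((hasDerivAt_const _ _).prodMk ((hasDerivAt_const _ _).prodMk (hasDerivAt_id _)))
  have hP : HasFDerivAt (fun ψ => V ψ (Tc x) x)
      (L.comp (ContinuousLinearMap.inl ℝ (Fin n → ℝ) (ℝ × ℝ))) (φ x) :=
    HasFDerivAt.comp (f := fun ψ => (ψ, Tc x, x)) (φ x) hF (hasFDerivAt_prodMk_left (φ x) (Tc x, x))
  have hX0 : L (0, 0, 1) = 0 := by
    rw [← hX.deriv, hNielsen]
    simp [hstat]
  have hP0 : ∀ v, L (v, 0, 0) = 0 := by
    intro v
    have h1 : fderiv ℝ (fun ψ => V ψ (Tc x) x) (φ x) v = L (v, 0, 0) := by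
      rw [hP.fderiv]; rfl
    rw [← h1, pi_eq_sum_univ' v, map_sum]
    refine Finset.sum_eq_zero fun i _ => ?_
    rw [map_smul]
    rw [hstat, smul_zero]
  have e : ((deriv φ x, deriv Tc x, 1) : (Fin n → ℝ) × ℝ × ℝ)
      = (deriv φ x, 0, 0) + (deriv Tc x) • (0, 1, 0) + (0, 0, 1) := by simp
  rw [e, map_add, map_add, map_smul, hP0, hX0] at h0
  rw [hT.deriv]
  simpa using h0


/-- Gauge independence of the critical temperature (Appendix C): if the
effective potential `V(φ, T, ξ)` satisfies the Nielsen identity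
`∂V/∂ξ = −∑ᵢ Cᵢ ∂V/∂φᵢ`, and `φ⁽¹⁾(ξ), φ⁽²⁾(ξ), T_c(ξ)` are differentiable
with the degeneracy and stationarity conditions holding for all `ξ`, then at
any `ξ₀` where the two values of `∂V/∂T` differ, `dT_c/dξ(ξ₀) = 0`. -/
theorem stmt_4 {n : ℕ} (V : (Fin n → ℝ) → ℝ → ℝ → ℝ)
    (hV : ContDiff ℝ 1 (fun p : (Fin n → ℝ) × ℝ × ℝ => V p.1 p.2.1 p.2.2))
    (C : (Fin n → ℝ) → ℝ → Fin n → ℝ)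
    (hNielsen : ∀ (φ : Fin n → ℝ) (T ξ : ℝ),
      deriv (fun s => V φ T s) ξ =
        - ∑ i, C φ ξ i * fderiv ℝ (fun ψ => V ψ T ξ) φ (Pi.single i 1))
    (φ1 φ2 : ℝ → Fin n → ℝ) (Tc : ℝ → ℝ)
    (hφ1 : Differentiable ℝ φ1) (hφ2 : Differentiable ℝ φ2)
    (hTc : Differentiable ℝ Tc)
    (hdeg : ∀ ξ, V (φ1 ξ) (Tc ξ) ξ = V (φ2 ξ) (Tc ξ) ξ)
    (hstat1 : ∀ ξ i, fderiv ℝ (fun ψ => V ψ (Tc ξ) ξ) (φ1 ξ) (Pi.single i 1) = 0)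
    (hstat2 : ∀ ξ i, fderiv ℝ (fun ψ => V ψ (Tc ξ) ξ) (φ2 ξ) (Pi.single i 1) = 0)
    (ξ₀ : ℝ)
    (hne : deriv (fun T => V (φ1 ξ₀) T ξ₀) (Tc ξ₀)
         ≠ deriv (fun T => V (φ2 ξ₀) T ξ₀) (Tc ξ₀)) :
    deriv Tc ξ₀ = 0 := by
  have h1 := phase_hasDerivAt V hV C hNielsen φ1 Tc hφ1 hTc hstat1 ξ₀
  have h2 := phase_hasDerivAt V hV C hNielsen φ2 Tc hφ2 hTc hstat2 ξ₀
  rw [funext hdeg] at h1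
  have h := h1.unique h2
  by_contra h0
  exact hne (mul_left_cancel₀ h0 h)
end

section
/- Let V : ℝⁿ × ℝ → ℝ, (φ, ξ) ↦ V(φ, ξ), be twice continuously differentiable, and let C : ℝⁿ × ℝ → ℝⁿ be continuously differentiable, satisfying the Nielsen identity ∂V/∂ξ(φ, ξ) = − Σᵢ Cᵢ(φ, ξ) · ∂V/∂φᵢ(φ, ξ) for all (φ, ξ). Suppose φ_min : ℝ → ℝⁿ is a differentiable curve of stationary points, i.e. ∂V/∂φᵢ(φ_min(ξ), ξ) = 0 for every i and every ξ, and suppose the Hessian matrix (∂²V/∂φᵢ∂φⱼ)(φ_min(ξ), ξ) is invertible. Then dφ_min,j/dξ(ξ) = Cⱼ(φ_min(ξ), ξ) for every j; in particular, if C is not identically zero along the curve, the minimizing field is gauge dependent. -/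
/-- Gauge dependence of the scalar minimizing field (Appendix D): along a
differentiable curve `φ_min(ξ)` of stationary points of the effective
potential `V(φ, ξ)` obeying the Nielsen identity `∂V/∂ξ = −∑ᵢ Cᵢ ∂V/∂φᵢ`,
if the Hessian at `φ_min(ξ)` is invertible then
`dφ_min,j/dξ(ξ) = Cⱼ(φ_min(ξ), ξ)` for every `j`. -/
theorem stmt_5 {n : ℕ} (V : (Fin n → ℝ) → ℝ → ℝ)
    (hV : ContDiff ℝ 2 (fun p : (Fin n → ℝ) × ℝ => V p.1 p.2))
    (C : (Fin n → ℝ) → ℝ → Fin n → ℝ)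
    (hC : ContDiff ℝ 1 (fun p : (Fin n → ℝ) × ℝ => C p.1 p.2))
    (hNielsen : ∀ (φ : Fin n → ℝ) (ξ : ℝ),
      deriv (fun s => V φ s) ξ =
        - ∑ i, C φ ξ i * fderiv ℝ (fun ψ => V ψ ξ) φ (Pi.single i 1))
    (φmin : ℝ → Fin n → ℝ) (hφmin : Differentiable ℝ φmin)
    (hstat : ∀ ξ i, fderiv ℝ (fun ψ => V ψ ξ) (φmin ξ) (Pi.single i 1) = 0)
    (hHess : ∀ ξ, IsUnit (Matrix.of fun i j : Fin n =>
      fderiv ℝ (fun ψ => fderiv ℝ (fun χ => V χ ξ) ψ (Pi.single j 1))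
        (φmin ξ) (Pi.single i 1))) :
    ∀ (ξ : ℝ) (j : Fin n), deriv (fun s => φmin s j) ξ = C (φmin ξ) ξ j := by
  intro ξ
  set F : (Fin n → ℝ) × ℝ → ℝ := fun p => V p.1 p.2 with hF
  have hFd : Differentiable ℝ F := hV.differentiable (by norm_num)
  have hG1 : ContDiff ℝ 1 (fderiv ℝ F) := hV.fderiv_right (by norm_num)
  have hGd : Differentiable ℝ (fderiv ℝ F) := hG1.differentiable (by norm_num)
  have hA : ∀ (φ : Fin n → ℝ) (s : ℝ) (v : Fin n → ℝ),
      fderiv ℝ (fun ψ => V ψ s) φ v = fderiv ℝ F (φ, s) (v, 0) := by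
    intro φ s v
    have h1 : HasFDerivAt (fun ψ : Fin n → ℝ => (ψ, s))
        (ContinuousLinearMap.inl ℝ (Fin n → ℝ) ℝ) φ := hasFDerivAt_prodMk_left φ s
    have h2 := ((hFd (φ, s)).hasFDerivAt).comp φ h1
    have h3 : fderiv ℝ (fun ψ => V ψ s) φ = _ := h2.fderiv
    rw [h3]
    simp
  have hB : ∀ (φ : Fin n → ℝ) (s : ℝ),
      deriv (fun t => V φ t) s = fderiv ℝ F (φ, s) (0, 1) := by
    intro φ s
    have h1 : HasFDerivAt (fun t : ℝ => (φ, t))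
        (ContinuousLinearMap.inr ℝ (Fin n → ℝ) ℝ) s := hasFDerivAt_prodMk_right φ s
    have h2 := ((hFd (φ, s)).hasFDerivAt).comp s h1
    have h3 : deriv (fun t => V φ t) s = _ := h2.hasDerivAt.deriv
    rw [h3]
    simp
  simp only [hA, hB] at hNielsen hstat hHess
  set p0 : (Fin n → ℝ) × ℝ := (φmin ξ, ξ) with hp0
  set D := fderiv ℝ (fderiv ℝ F) p0 with hD
  have hDG : HasFDerivAt (fderiv ℝ F) D p0 := (hGd p0).hasFDerivAt
  have hsymm : ∀ u v, D u v = D v u := fun u v =>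
    second_derivative_symmetric (fun y => (hFd y).hasFDerivAt) hDG u v
  have happ : ∀ v, HasFDerivAt (fun p => fderiv ℝ F p v) (D.flip v) p0 := by
    intro v
    have := hDG.clm_apply (hasFDerivAt_const v p0)
    have e : (fderiv ℝ F p0).comp (0 : (Fin n → ℝ) × ℝ →L[ℝ] (Fin n → ℝ) × ℝ) + D.flip v
        = D.flip v := by
      rw [ContinuousLinearMap.comp_zero, zero_add]
    exact e ▸ this
  -- Hessian entries
  have hH : ∀ i j : Fin n,
      fderiv ℝ (fun ψ => fderiv ℝ F (ψ, ξ) (Pi.single j 1, 0)) (φmin ξ) (Pi.single i 1)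
        = D (Pi.single i 1, 0) (Pi.single j 1, 0) := by
    intro i j
    have h1 : HasFDerivAt (fun ψ : Fin n → ℝ => (ψ, ξ))
        (ContinuousLinearMap.inl ℝ (Fin n → ℝ) ℝ) (φmin ξ) := hasFDerivAt_prodMk_left (φmin ξ) ξ
    have h2 := HasFDerivAt.comp (f := fun ψ : Fin n → ℝ => (ψ, ξ)) (φmin ξ)
      (happ (Pi.single j 1, 0)) h1
    have h3 : fderiv ℝ (fun ψ => fderiv ℝ F (ψ, ξ) (Pi.single j 1, 0)) (φmin ξ) = _ := h2.fderiv
    rw [h3]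
    simp
  -- differentiated Nielsen identity
  have hCi : ∀ i, DifferentiableAt ℝ (fun p : (Fin n → ℝ) × ℝ => C p.1 p.2 i) p0 := by
    intro i
    exact differentiableAt_pi.1 ((hC.differentiable (by norm_num)) p0) i
  have hN : ∀ u, D u (0, 1) = - ∑ i, C (φmin ξ) ξ i * D u (Pi.single i 1, 0) := by
    intro u
    have h1 := happ (0, 1)
    have h2 := (HasFDerivAt.fun_sum (u := Finset.univ) (fun i _ =>
      (hCi i).hasFDerivAt.mul (happ (Pi.single i 1, 0)))).neg
    have h3 := h1.unique (h2.congr_of_eventuallyEq (Filter.Eventually.of_forall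
      (fun p => by simpa using hNielsen p.1 p.2)))
    have h4 := congrArg (fun L => L u) h3
    simpa [hp0, hstat, sum_apply] using h4
  have hS : ∀ v : Fin n, D (deriv φmin ξ, 1) (Pi.single v 1, 0) = 0 := by
    intro v
    have h1 : HasDerivAt (fun s => (φmin s, s)) (deriv φmin ξ, (1:ℝ)) ξ :=
      (hφmin ξ).hasDerivAt.prodMk (hasDerivAt_id ξ)
    have h2 := HasFDerivAt.comp_hasDerivAt (f := fun s => (φmin s, s)) ξ
      (happ (Pi.single v 1, 0)) h1
    have h3 := h2.unique ((hasDerivAt_const ξ (0:ℝ)).congr_of_eventuallyEq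
      (Filter.Eventually.of_forall (fun s => hstat s v)))
    simpa using h3
  have hker : (Matrix.of fun i j : Fin n => D (Pi.single i 1, 0) (Pi.single j 1, 0)).mulVec
      (deriv φmin ξ - C (φmin ξ) ξ) = 0 := by
    ext k
    have h1 := hS k
    rw [hsymm] at h1
    have h2 : ((deriv φmin ξ, (1:ℝ)) : (Fin n → ℝ) × ℝ)
        = ∑ i, deriv φmin ξ i • ((Pi.single i 1, 0) : (Fin n → ℝ) × ℝ) + (0, 1) := by
      ext j
      · simp [Prod.fst_sum, Finset.sum_apply, Pi.single_apply]
      · simp [Prod.snd_sum]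
    rw [h2, map_add, map_sum, hN] at h1
    simp only [map_smul, smul_eq_mul] at h1
    simp only [Matrix.mulVec, dotProduct, Matrix.of_apply, Pi.sub_apply, Pi.zero_apply,
      mul_sub, Finset.sum_sub_distrib]
    simp only [mul_comm (D _ _)]
    linarith
  have hU := hHess ξ
  simp only [hH] at hU
  have hinj := Matrix.mulVec_injective_of_isUnit hU
  have h0 : deriv φmin ξ - C (φmin ξ) ξ = 0 := hinj (by rw [hker, Matrix.mulVec_zero])
  intro j
  have hj : deriv (fun s => φmin s j) ξ = deriv φmin ξ j :=
    (hasDerivAt_pi.1 (hφmin ξ).hasDerivAt j).deriv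
  rw [hj, sub_eq_zero.1 h0]
end

section
/- Let V₀ : ℝ → ℝ be twice continuously differentiable and V₁, V₂ : ℝ → ℝ be continuously differentiable. Let φ : ℝ → ℝ be differentiable on a neighborhood of 0 with φ(0) = φ₀, where V₀′(φ₀) = 0 and V₀″(φ₀) ≠ 0, and suppose V₀′(φ(ℏ)) + ℏ·V₁′(φ(ℏ)) + ℏ²·V₂′(φ(ℏ)) = 0 for all ℏ near 0. Define g(ℏ) = V₀(φ(ℏ)) + ℏ·V₁(φ(ℏ)) + ℏ²·V₂(φ(ℏ)). Then g(0) = V₀(φ₀), g′(0) = V₁(φ₀), and g is twice differentiable at 0 with g″(0) = 2·[ V₂(φ₀) − (1/2)·φ′(0)²·V₀″(φ₀) ], where φ′(0) = −V₁′(φ₀)/V₀″(φ₀). Equivalently, V_eff(φ_min(ℏ)) = V₀(φ₀) + ℏ V₁(φ₀) + ℏ²[V₂(φ₀) − ½ φ₁² V₀″(φ₀)] + O(ℏ³) with φ₁ = φ′(0). -/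
/-- Equation (Vcurve) of Section III.A: the value of the effective potential
`V₀ + ℏV₁ + ℏ²V₂` at its ℏ-expanded extremum `φ(ℏ)` has Taylor data
`g(0) = V₀(φ₀)`, `g′(0) = V₁(φ₀)`,
`g″(0) = 2[V₂(φ₀) − ½ φ′(0)² V₀″(φ₀)]`, with
`φ′(0) = −V₁′(φ₀)/V₀″(φ₀)`. -/
theorem stmt_9 (V₀ V₁ V₂ : ℝ → ℝ) (hV₀ : ContDiff ℝ 2 V₀)
    (hV₁ : ContDiff ℝ 1 V₁) (hV₂ : ContDiff ℝ 1 V₂)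
    (φ : ℝ → ℝ) (U : Set ℝ) (hU : U ∈ nhds (0 : ℝ))
    (hφ : ∀ h ∈ U, DifferentiableAt ℝ φ h)
    (φ₀ : ℝ) (hφ0 : φ 0 = φ₀) (h1 : deriv V₀ φ₀ = 0)
    (h2 : deriv (deriv V₀) φ₀ ≠ 0)
    (hstat : ∀ h ∈ U,
      deriv V₀ (φ h) + h * deriv V₁ (φ h) + h ^ 2 * deriv V₂ (φ h) = 0)
    (g : ℝ → ℝ) (hg : ∀ h, g h = V₀ (φ h) + h * V₁ (φ h) + h ^ 2 * V₂ (φ h)) :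
    g 0 = V₀ φ₀ ∧ deriv g 0 = V₁ φ₀ ∧
    DifferentiableAt ℝ (deriv g) 0 ∧
    deriv (deriv g) 0
      = 2 * (V₂ φ₀ - (1 / 2) * (deriv φ 0) ^ 2 * deriv (deriv V₀) φ₀) ∧
    deriv φ 0 = - deriv V₁ φ₀ / deriv (deriv V₀) φ₀ := by
  have hmem : (0 : ℝ) ∈ U := mem_of_mem_nhds hU
  have d0 : Differentiable ℝ V₀ := hV₀.differentiable (by norm_num)
  have d1 : Differentiable ℝ V₁ := hV₁.differentiable (by norm_num)
  have d2 : Differentiable ℝ V₂ := hV₂.differentiable (by norm_num)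
  have dd0 : Differentiable ℝ (deriv V₀) := hV₀.differentiable_deriv_two
  have c1 : Continuous (deriv V₁) := hV₁.continuous_deriv le_rfl
  have c2 : Continuous (deriv V₂) := hV₂.continuous_deriv le_rfl
  have hg' : ∀ h ∈ U, deriv g h = V₁ (φ h) + 2 * h * V₂ (φ h) := by
    intro h hh
    have hp := (hφ h hh).hasDerivAt
    have e0 := (d0 (φ h)).hasDerivAt.comp h hp
    have e1 := (hasDerivAt_id h).mul ((d1 (φ h)).hasDerivAt.comp h hp)
    have e2 := ((hasDerivAt_id h).pow 2).mul ((d2 (φ h)).hasDerivAt.comp h hp)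
    have e := (e0.add e1).add e2
    have e' : HasDerivAt g _ h := e.congr_of_eventuallyEq
      (Filter.Eventually.of_forall fun x => by simp [hg x])
    rw [e'.deriv]
    have := hstat h hh
    simp
    linear_combination (deriv φ h) * this
  have hp := (hφ 0 hmem).hasDerivAt
  have hev : deriv g =ᶠ[nhds 0] fun h => V₁ (φ h) + 2 * h * V₂ (φ h) := by
    filter_upwards [hU] with h hh using hg' h hh
  have hgg : HasDerivAt (deriv g) (deriv V₁ φ₀ * deriv φ 0 + 2 * V₂ φ₀) 0 := by
    have e1 := (d1 (φ 0)).hasDerivAt.comp 0 hp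
    have e2 := ((hasDerivAt_id (0:ℝ)).const_mul 2).mul ((d2 (φ 0)).hasDerivAt.comp 0 hp)
    have e := (e1.add e2).congr_of_eventuallyEq (f₁ := deriv g)
      (hev.trans (Filter.Eventually.of_forall fun x => by simp))
    have hv : deriv V₁ (φ 0) * deriv φ 0 + 2 * V₂ (φ 0) = deriv V₁ φ₀ * deriv φ 0 + 2 * V₂ φ₀ := by rw [hφ0]
    rw [← hv]
    refine e.congr_deriv ?_
    simp
  have hrel : deriv (deriv V₀) φ₀ * deriv φ 0 + deriv V₁ φ₀ = 0 := by
    have e0 := (dd0 (φ 0)).hasDerivAt.comp 0 hp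
    have hk : HasDerivAt (fun h => h * (deriv V₁ (φ h) + h * deriv V₂ (φ h)))
        (deriv V₁ φ₀) 0 := by
      rw [hasDerivAt_iff_tendsto_slope]
      have hc : ContinuousAt (fun h => deriv V₁ (φ h) + h * deriv V₂ (φ h)) 0 := by
        have := hp.continuousAt
        exact (c1.continuousAt.comp this).add
          (continuousAt_id.mul (c2.continuousAt.comp this))
      have ht := hc.tendsto.mono_left (nhdsWithin_le_nhds (s := {0}ᶜ))
      simp only [zero_mul, add_zero, hφ0] at ht
      refine ht.congr' ?_
      filter_upwards [self_mem_nhdsWithin] with x hx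
      have hx : x ≠ 0 := hx
      simp [slope_def_field]
      field_simp
    have e := e0.add hk
    have z : HasDerivAt (fun _ : ℝ => (0:ℝ)) _ 0 := e.congr_of_eventuallyEq (by
      filter_upwards [hU] with h hh
      have := hstat h hh
      simp
      linear_combination -this)
    have := z.unique (hasDerivAt_const 0 0)
    rwa [hφ0] at this
  refine ⟨by simp [hg, hφ0], by simp [hg' 0 hmem, hφ0], hgg.differentiableAt, ?_, ?_⟩
  · rw [hgg.deriv]
    linear_combination (deriv φ 0) * hrel
  · rw [eq_div_iff h2]
    linear_combination hrel
end

section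
/- Let D, λ̄, T₀ > 0 and E ≥ 0, and set φ₀ = T₀·√(2D/λ̄) (the tree-level broken minimum). Consider the high-temperature effective potential V(φ, T) = D(T² − T₀²)φ² − E T φ³ + (λ̄/4)φ⁴. Then the degeneracy condition V(φ₀, T_C) = 0 has exactly one positive solution T_C, given by T_C = T₀ · [ E T₀/(λ̄ φ₀) + √( (E T₀/(λ̄ φ₀))² + 1/2 ) ]. -/
/-- The O(ℏ) gauge-independent critical temperature (Section III.B): with
`φ₀ = T₀√(2D/λ̄)`, the degeneracy condition `V(φ₀, T_C) = 0` for
`V(φ, T) = D(T² − T₀²)φ² − ETφ³ + (λ̄/4)φ⁴` has exactly one positive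
solution, namely `T_C = T₀ (ET₀/(λ̄φ₀) + √((ET₀/(λ̄φ₀))² + 1/2))`. -/
theorem stmt_10 (D lam T₀ E : ℝ) (hD : 0 < D) (hlam : 0 < lam)
    (hT₀ : 0 < T₀) (hE : 0 ≤ E)
    (φ₀ : ℝ) (hφ₀ : φ₀ = T₀ * Real.sqrt (2 * D / lam))
    (TC : ℝ)
    (hTC : TC = T₀ * (E * T₀ / (lam * φ₀)
      + Real.sqrt ((E * T₀ / (lam * φ₀)) ^ 2 + 1 / 2))) :
    (0 < TC ∧ D * (TC ^ 2 - T₀ ^ 2) * φ₀ ^ 2 - E * TC * φ₀ ^ 3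
        + (lam / 4) * φ₀ ^ 4 = 0)
    ∧ ∀ T : ℝ, 0 < T →
        D * (T ^ 2 - T₀ ^ 2) * φ₀ ^ 2 - E * T * φ₀ ^ 3
          + (lam / 4) * φ₀ ^ 4 = 0 → T = TC := by
  have hφ : 0 < φ₀ := by rw [hφ₀]; positivity
  have hsq : lam * φ₀ ^ 2 = 2 * D * T₀ ^ 2 := by
    rw [hφ₀, mul_pow, Real.sq_sqrt (by positivity)]
    field_simp
  obtain ⟨a, ha⟩ : ∃ a, a = E * T₀ / (lam * φ₀) := ⟨_, rfl⟩
  rw [← ha] at hTC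
  have ha0 : 0 ≤ a := by rw [ha]; positivity
  have ha1 : a * (lam * φ₀) = E * T₀ := by rw [ha]; field_simp
  have hs0 : 0 < Real.sqrt (a ^ 2 + 1 / 2) := Real.sqrt_pos.mpr (by positivity)
  have hs2 : Real.sqrt (a ^ 2 + 1 / 2) ^ 2 = a ^ 2 + 1 / 2 := Real.sq_sqrt (by positivity)
  generalize Real.sqrt (a ^ 2 + 1 / 2) = s at *
  have hTC0 : 0 < TC := by rw [hTC]; positivity
  have hE1 : E * φ₀ ^ 3 = 2 * D * a * T₀ * φ₀ ^ 2 := by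
    apply mul_left_cancel₀ hT₀.ne'
    linear_combination (-φ₀ ^ 3) * ha1 + a * φ₀ ^ 2 * hsq
  have hsa : 0 < s + a := by positivity
  have hV : ∀ T : ℝ, D * (T ^ 2 - T₀ ^ 2) * φ₀ ^ 2 - E * T * φ₀ ^ 3
      + (lam / 4) * φ₀ ^ 4 = D * φ₀ ^ 2 * ((T - TC) * (T + T₀ * (s - a))) := by
    intro T
    rw [hTC]
    linear_combination (-T) * hE1 + φ₀ ^ 2 / 4 * hsq + D * φ₀ ^ 2 * T₀ ^ 2 * hs2
  have hsa' : 0 < s - a := by nlinarith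
  refine ⟨⟨hTC0, by rw [hV]; ring⟩, fun T hT h => ?_⟩
  rw [hV] at h
  have h1 : D * φ₀ ^ 2 ≠ 0 := by positivity
  have h2 : T + T₀ * (s - a) ≠ 0 := by positivity
  rcases mul_eq_zero.mp h with h | h
  · exact absurd h h1
  · rcases mul_eq_zero.mp h with h | h
    · linarith
    · exact absurd h h2
end
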